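/- For all positive integers a and m and every nonnegative integer n, cp^o_{a,a,m}(n) ≤ cp^e_{a,a,m}(n). -/

import Mathlib

/-- `(γ, ρ, σ)` is an `(a,b,m)`-copartition. -/
def IsCopartition (a b m : ℕ) (γ ρ σ : Multiset ℕ) : Prop :=
  (∀ x ∈ γ, a ≤ x ∧ x % m = a % m) ∧
  (∀ x ∈ σ, b ≤ x ∧ x % m = b % m) ∧
  ρ = Multiset.replicate (Multiset.card σ) (m * Multiset.card γ)

/-- The set of `(a,b,m)`-copartitions of size `n`. -/
def cpSet (a b m n : ℕ) : Set (Multiset ℕ × Multiset ℕ × Multiset ℕ) :=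
  {t | IsCopartition a b m t.1 t.2.1 t.2.2 ∧ t.1.sum + t.2.1.sum + t.2.2.sum = n}

/-- `cp^o_{a,b,m}(n)`. -/
noncomputable def cpOdd (a b m n : ℕ) : ℕ :=
  {t ∈ cpSet a b m n | Odd (Multiset.card t.1)}.ncard

/-- `cp^e_{a,b,m}(n)`. -/
noncomputable def cpEven (a b m n : ℕ) : ℕ :=
  {t ∈ cpSet a b m n | Even (Multiset.card t.1)}.ncard

/-!
Write `q = X ^ m` and `x = X ^ a`, let `z` mark the total number of parts of `γ` and `σ`, and give
a copartition the sign `(-1) ^ ν(γ)`. The `q`-binomial theorem evaluates the signed generating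
function as `G(z) = (-x²z²; q)_∞ / (x²z²; q²)_∞`, which has nonnegative coefficients. Neither
product has to be formed: they are encoded by the functional equation
`(1 - x²z²) G(z) = (1 + x²z²) (1 + q x²z²) G(qz)`, which determines the coefficient of each `z ^ N`
from the earlier ones. The only division in this recursion is by `1 - q ^ N`, and it preserves
nonnegativity.
-/

open PowerSeries
open Finset.HasAntidiagonal (antidiagonal mem_antidiagonal)

section TwistedMul

variable {R : Type*}

/-- The `q`-twisted Cauchy product `∑ q ^ (k * l) * u k * v l * X ^ (k + l)` of
`U = ∑ u k * X ^ k` and `V = ∑ v l * X ^ l`. The exponent `k * l` models the rectangle `ρ` of a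
copartition. -/
noncomputable def twistedMul [CommSemiring R] (q : R) (U V : R⟦X⟧) : R⟦X⟧ :=
  .mk fun N ↦ ∑ p ∈ antidiagonal N, q ^ (p.1 * p.2) * coeff p.1 U * coeff p.2 V

theorem twistedMul_comm [CommSemiring R] (q : R) (U V : R⟦X⟧) :
    twistedMul q U V = twistedMul q V U := by
  ext N
  simp only [twistedMul, coeff_mk]
  rw [← Finset.Nat.sum_antidiagonal_swap]
  refine Finset.sum_congr rfl fun p _ ↦ ?_
  simp only [Prod.fst_swap, Prod.snd_swap]
  ring

theorem rescale_twistedMul [CommSemiring R] (q r : R) (U V : R⟦X⟧) :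
    rescale r (twistedMul q U V) = twistedMul q (rescale r U) (rescale r V) := by
  ext N
  simp only [twistedMul, coeff_rescale, coeff_mk, Finset.mul_sum]
  refine Finset.sum_congr rfl fun p hp ↦ ?_
  rw [← mem_antidiagonal.1 hp]
  ring

theorem twistedMul_X_mul_left [CommSemiring R] (q : R) (U V : R⟦X⟧) :
    twistedMul q (X * U) V = X * twistedMul q U (rescale q V) := by
  ext (_ | N)
  · simp [twistedMul]
  · simp only [twistedMul, coeff_succ_X_mul, coeff_mk, coeff_rescale,
      Finset.Nat.sum_antidiagonal_succ, coeff_zero_X_mul, mul_zero, zero_mul, zero_add]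
    exact Finset.sum_congr rfl fun p _ ↦ by ring

theorem twistedMul_C_mul_left [CommSemiring R] (q c : R) (U V : R⟦X⟧) :
    twistedMul q (C c * U) V = C c * twistedMul q U V := by
  ext N
  simp only [twistedMul, coeff_C_mul, coeff_mk, Finset.mul_sum]
  exact Finset.sum_congr rfl fun p _ ↦ by ring

theorem rescale_C [CommSemiring R] (r c : R) : rescale r (C c) = C c := by
  ext (_ | n) <;> simp [coeff_C]

variable [CommRing R] {q x y : R} {U V : R⟦X⟧}

theorem twistedMul_sub_left (q : R) (U U' V : R⟦X⟧) :
    twistedMul q (U - U') V = twistedMul q U V - twistedMul q U' V := by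
  ext N
  simp only [twistedMul, map_sub, coeff_mk, ← Finset.sum_sub_distrib]
  exact Finset.sum_congr rfl fun p _ ↦ by ring

theorem one_sub_C_mul_X_mul_rescale (r : R) (hU : (1 - C x * X) * U = rescale q U) :
    (1 - C (r * x) * X) * rescale r U = rescale q (rescale r U) := by
  have hcomm : rescale q (rescale r U) = rescale r (rescale q U) := by
    rw [rescale_rescale, rescale_rescale, mul_comm]
  rw [hcomm, ← hU]
  simp only [map_mul, map_sub, map_one, rescale_C, rescale_X]
  ring

theorem twistedMul_sub_twistedMul_rescale_left (hU : (1 - C x * X) * U = rescale q U)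
    (V : R⟦X⟧) :
    twistedMul q U V - twistedMul q (rescale q U) V =
      C x * X * twistedMul q U (rescale q V) := by
  have hU' : U - rescale q U = C x * (X * U) := by linear_combination hU
  rw [← twistedMul_sub_left, hU', twistedMul_C_mul_left, twistedMul_X_mul_left, mul_assoc]

/- The hypotheses say `U = u₀ / (xX; q)_∞` and `V = v₀ / (yX; q)_∞`, and the conclusion is the
functional equation of `(xyX²; q)_∞ / ((xX; q)_∞ (yX; q)_∞)`: the `q`-binomial theorem. -/
theorem one_sub_mul_twistedMul_rescale_left (hU : (1 - C x * X) * U = rescale q U)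
    (hV : (1 - C y * X) * V = rescale q V) :
    (1 - C x * X) * twistedMul q U V =
      (1 - C (x * y) * X ^ 2) * twistedMul q (rescale q U) V := by
  have hleft := twistedMul_sub_twistedMul_rescale_left hU V
  have hright := twistedMul_sub_twistedMul_rescale_left hV U
  rw [twistedMul_comm q V, twistedMul_comm q _ U, twistedMul_comm q V] at hright
  rw [map_mul]
  linear_combination hleft - C x * X * hright

theorem one_sub_mul_one_sub_mul_twistedMul (hU : (1 - C x * X) * U = rescale q U)
    (hV : (1 - C y * X) * V = rescale q V) :
    (1 - C x * X) * (1 - C y * X) * twistedMul q U V =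
      (1 - C (x * y) * X ^ 2) * (1 - C (q * (x * y)) * X ^ 2) *
        rescale q (twistedMul q U V) := by
  have hleft := one_sub_mul_twistedMul_rescale_left hU hV
  have hright := one_sub_mul_twistedMul_rescale_left hV (one_sub_C_mul_X_mul_rescale q hU)
  rw [twistedMul_comm q V, twistedMul_comm q _ (rescale q U), ← rescale_twistedMul,
    show y * (q * x) = q * (x * y) by ring] at hright
  linear_combination (1 - C y * X) * hleft + (1 - C (x * y) * X ^ 2) * hright

end TwistedMul

section Positivity

variable {R : Type*}

/-- The power series whose coefficients all lie in the subsemiring `S`. For `S` the nonnegative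
elements, this expresses coefficientwise nonnegativity; iterating it covers series in several
variables. -/
def coeffSubsemiring [Semiring R] (S : Subsemiring R) : Subsemiring R⟦X⟧ where
  carrier := {f | ∀ n, coeff n f ∈ S}
  zero_mem' _ := by simp
  one_mem' n := by
    rw [coeff_one]
    split_ifs
    exacts [one_mem S, zero_mem S]
  add_mem' hf hg n := by simpa only [map_add] using add_mem (hf n) (hg n)
  mul_mem' hf hg n := by
    rw [coeff_mul]
    exact sum_mem fun p _ ↦ mul_mem (hf p.1) (hg p.2)

theorem X_mem_coeffSubsemiring [Semiring R] (S : Subsemiring R) : X ∈ coeffSubsemiring S := by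
  intro n
  rw [coeff_X]
  split_ifs
  exacts [one_mem S, zero_mem S]

theorem C_mem_coeffSubsemiring [Semiring R] {S : Subsemiring R} {c : R} (hc : c ∈ S) :
    C c ∈ coeffSubsemiring S := by
  intro n
  rw [coeff_C]
  split_ifs
  exacts [hc, zero_mem S]

variable [CommRing R]

theorem mem_coeffSubsemiring_of_one_sub_X_pow_mul_mem {S : Subsemiring R} {d : ℕ} (hd : 0 < d)
    {f : R⟦X⟧} (h : (1 - X ^ d) * f ∈ coeffSubsemiring S) : f ∈ coeffSubsemiring S := by
  intro n
  induction n using Nat.strong_induction_on with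
  | _ n ih =>
    have hn : coeff n f = coeff n ((1 - X ^ d) * f) + coeff n (X ^ d * f) := by
      rw [← map_add]
      ring_nf
    rw [hn, coeff_X_pow_mul']
    refine add_mem (h n) ?_
    split_ifs
    exacts [ih _ (by lia), zero_mem S]

/- Comparing coefficients of `X ^ (N + 1)` expresses `1 - q ^ (N + 1)` times the next coefficient
of `G` through the earlier ones. -/
theorem mem_coeffSubsemiring_of_mul_eq_mul_rescale {S : Subsemiring R} {q : R} (hq : q ∈ S)
    (hdiv : ∀ k f, (1 - q ^ (k + 1)) * f ∈ S → f ∈ S) {A B G : R⟦X⟧}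
    (hA : A ∈ coeffSubsemiring S) (hB : B ∈ coeffSubsemiring S) (hG : constantCoeff G ∈ S)
    (h : (1 - X * A) * G = (1 + X * B) * rescale q G) : G ∈ coeffSubsemiring S := by
  intro N
  induction N using Nat.strong_induction_on with
  | _ N ih =>
    rcases N with _ | N
    · rwa [coeff_zero_eq_constantCoeff_apply]
    · have hrec : (1 - q ^ (N + 1)) * coeff (N + 1) G =
          coeff N (A * G) + coeff N (B * rescale q G) := by
        rw [sub_mul, one_mul, ← coeff_rescale, ← coeff_succ_X_mul N (A * G),
          ← coeff_succ_X_mul N (B * _), ← map_sub, ← map_add]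
        congr 1
        linear_combination h
      refine hdiv N _ ?_
      rw [hrec, coeff_mul, coeff_mul]
      refine add_mem (sum_mem fun p hp ↦ mul_mem (hA _) ?_) (sum_mem fun p hp ↦ mul_mem (hB _) ?_)
      · exact ih _ (Finset.Nat.antidiagonal.snd_lt hp)
      · rw [coeff_rescale]
        exact mul_mem (pow_mem hq _) (ih _ (Finset.Nat.antidiagonal.snd_lt hp))

theorem twistedMul_rescale_neg_one_mem_coeffSubsemiring {S : Subsemiring R} {q x : R} {U : R⟦X⟧}
    (hq : q ∈ S) (hdiv : ∀ k f, (1 - q ^ (k + 1)) * f ∈ S → f ∈ S) (hx : x ∈ S)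
    (hU₀ : constantCoeff U ∈ S) (hU : (1 - C x * X) * U = rescale q U) :
    twistedMul q (rescale (-1) U) U ∈ coeffSubsemiring S := by
  have hX : X ∈ coeffSubsemiring S := X_mem_coeffSubsemiring S
  have hCx : C x ∈ coeffSubsemiring S := C_mem_coeffSubsemiring hx
  have hCq : C q ∈ coeffSubsemiring S := C_mem_coeffSubsemiring hq
  have hfun := one_sub_mul_one_sub_mul_twistedMul (one_sub_C_mul_X_mul_rescale (-1) hU) hU
  refine mem_coeffSubsemiring_of_mul_eq_mul_rescale hq hdiv (A := C x ^ 2 * X)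
    (B := (1 + C q) * C x ^ 2 * X + C q * C x ^ 4 * X ^ 3) ?_ ?_ ?_ ?_
  · exact mul_mem (pow_mem hCx 2) hX
  · exact add_mem (mul_mem (mul_mem (add_mem (one_mem _) hCq) (pow_mem hCx 2)) hX)
      (mul_mem (mul_mem hCq (pow_mem hCx 4)) (pow_mem hX 3))
  · rw [← coeff_zero_eq_constantCoeff_apply] at hU₀ ⊢
    simpa [twistedMul] using mul_mem hU₀ hU₀
  · simp only [map_mul, map_neg, map_one] at hfun
    linear_combination hfun

end Positivity

section WeightSeries

variable {α β : Type*}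

/-- The generating function `∑ X ^ w x` over `x ∈ s`. Its coefficients are `Set.ncard`s, so they
count correctly only where the fibres of the weight `w` on `s` are finite. -/
noncomputable def weightSeries (s : Set α) (w : α → ℕ) : ℤ⟦X⟧ :=
  .mk fun n ↦ ({x ∈ s | w x = n}.ncard : ℤ)

theorem weightSeries_union {s t : Set α} {w : α → ℕ} (hst : Disjoint s t)
    (hs : ∀ n, {x ∈ s | w x = n}.Finite) (ht : ∀ n, {x ∈ t | w x = n}.Finite) :
    weightSeries (s ∪ t) w = weightSeries s w + weightSeries t w := by
  ext n
  have hsplit : {x ∈ s ∪ t | w x = n} = {x ∈ s | w x = n} ∪ {x ∈ t | w x = n} :=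
    Set.union_inter_distrib_right s t _
  simp only [weightSeries, coeff_mk, map_add]
  rw [hsplit, Set.ncard_union_eq (hst.mono (Set.sep_subset _ _) (Set.sep_subset _ _)) (hs n) (ht n),
    Nat.cast_add]

theorem weightSeries_image {s : Set α} {v : α → ℕ} {w : β → ℕ} {f : α → β} {d : ℕ}
    (hf : s.InjOn f) (hw : ∀ x ∈ s, w (f x) = d + v x) :
    weightSeries (f '' s) w = X ^ d * weightSeries s v := by
  ext n
  have himage : {y ∈ f '' s | w y = n} = f '' {x ∈ s | d + v x = n} := by
    ext y
    constructor
    · rintro ⟨⟨x, hx, rfl⟩, hn⟩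
      exact ⟨x, ⟨hx, hw x hx ▸ hn⟩, rfl⟩
    · rintro ⟨x, ⟨hx, hn⟩, rfl⟩
      exact ⟨⟨x, hx, rfl⟩, (hw x hx).trans hn⟩
  rw [coeff_X_pow_mul']
  simp only [weightSeries, coeff_mk]
  rw [himage, (hf.mono (Set.sep_subset _ _)).ncard_image]
  split_ifs with hd
  · simp only [eq_comm (b := n - d), Nat.sub_eq_iff_eq_add' hd, eq_comm (a := n)]
  · have hempty : {x ∈ s | d + v x = n} = ∅ := Set.eq_empty_of_forall_notMem fun x hx ↦ by
      have := hx.2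
      lia
    rw [hempty, Set.ncard_empty, Nat.cast_zero]

theorem weightSeries_prod {s : Set α} {t : Set β} {v : α → ℕ} {w : β → ℕ}
    (hs : ∀ n, {x ∈ s | v x = n}.Finite) (ht : ∀ n, {y ∈ t | w y = n}.Finite) :
    weightSeries (s ×ˢ t) (fun p ↦ v p.1 + w p.2) = weightSeries s v * weightSeries t w := by
  ext n
  have hfibre : {p ∈ s ×ˢ t | v p.1 + w p.2 = n} =
      ⋃ i ∈ (antidiagonal n : Set (ℕ × ℕ)),
        {x ∈ s | v x = i.1} ×ˢ {y ∈ t | w y = i.2} := by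
    ext p
    simp only [Set.mem_iUnion₂, Finset.mem_coe, mem_antidiagonal]
    constructor
    · rintro ⟨⟨hs, ht⟩, hn⟩
      exact ⟨(v p.1, w p.2), hn, ⟨hs, rfl⟩, ht, rfl⟩
    · rintro ⟨i, hi, ⟨hs, hv⟩, ht, hw⟩
      exact ⟨⟨hs, ht⟩, by rw [hv, hw, hi]⟩
  have hdisj : (antidiagonal n : Set (ℕ × ℕ)).PairwiseDisjoint
      fun i ↦ {x ∈ s | v x = i.1} ×ˢ {y ∈ t | w y = i.2} := by
    intro i _ j _ hij
    refine Set.disjoint_left.2 fun p hi hj ↦ hij (Prod.ext ?_ ?_)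
    exacts [hi.1.2.symm.trans hj.1.2, hi.2.2.symm.trans hj.2.2]
  rw [coeff_mul]
  simp only [weightSeries, coeff_mk]
  rw [hfibre, (Finset.finite_toSet _).ncard_biUnion (fun i _ ↦ (hs _).prod (ht _)) hdisj,
    finsum_mem_coe_finset, Nat.cast_sum]
  simp only [Set.ncard_prod, Nat.cast_mul]

end WeightSeries

theorem finite_setOf_pos_and_sum_le (n : ℕ) :
    {γ : Multiset ℕ | (∀ x ∈ γ, 0 < x) ∧ γ.sum ≤ n}.Finite := by
  refine ((Set.finite_Iic n).biUnion fun s _ ↦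
    Set.finite_range (Nat.Partition.parts (n := s))).subset fun γ ⟨hpos, hsum⟩ ↦ ?_
  exact Set.mem_biUnion (Set.mem_Iic.2 hsum) ⟨⟨γ, hpos _, rfl⟩, rfl⟩

/-- The partitions into exactly `k` parts, each `≥ a` and `≡ a (mod m)`. -/
def progressionPartitions (a m k : ℕ) : Set (Multiset ℕ) :=
  {γ | (∀ x ∈ γ, a ≤ x ∧ x % m = a % m) ∧ γ.card = k}

theorem finite_setOf_mem_progressionPartitions {a : ℕ} (ha : 0 < a) (m k n : ℕ) :
    {γ ∈ progressionPartitions a m k | γ.sum = n}.Finite :=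
  (finite_setOf_pos_and_sum_le n).subset fun _ hγ ↦
    ⟨fun x hx ↦ ha.trans_le (hγ.1.1 x hx).1, hγ.2.le⟩

theorem image_map_add_progressionPartitions {a m : ℕ} (hm : 0 < m) (k : ℕ) :
    Multiset.map (· + m) '' progressionPartitions a m k =
      {γ ∈ progressionPartitions a m k | a ∉ γ} := by
  ext γ
  constructor
  · rintro ⟨δ, ⟨hδ, hcard⟩, rfl⟩
    refine ⟨⟨fun x hx ↦ ?_, by simpa using hcard⟩, fun ha ↦ ?_⟩
    · obtain ⟨y, hy, rfl⟩ := Multiset.mem_map.1 hx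
      exact ⟨(hδ y hy).1.trans (Nat.le_add_right y m), by simpa using (hδ y hy).2⟩
    · obtain ⟨y, hy, hya⟩ := Multiset.mem_map.1 ha
      have := (hδ y hy).1
      lia
  · rintro ⟨⟨hγ, hcard⟩, ha⟩
    have hge : ∀ x ∈ γ, a + m ≤ x := fun x hx ↦ by
      obtain ⟨hax, hmod⟩ := hγ x hx
      have hlt : a < x := hax.lt_of_ne (by rintro rfl; exact ha hx)
      have := Nat.le_of_dvd (by lia) ((Nat.modEq_iff_dvd' hax).1 hmod.symm)
      lia
    refine ⟨γ.map (· - m), ⟨fun x hx ↦ ?_, by simpa using hcard⟩, ?_⟩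
    · obtain ⟨y, hy, rfl⟩ := Multiset.mem_map.1 hx
      have hay := hge y hy
      exact ⟨by lia, by rw [← Nat.mod_eq_sub_mod (by lia)]; exact (hγ y hy).2⟩
    · rw [Multiset.map_map]
      refine (Multiset.map_congr rfl fun x hx ↦ ?_).trans γ.map_id
      exact Nat.sub_add_cancel (le_of_add_le_right (hge x hx))

theorem image_cons_progressionPartitions (a m k : ℕ) :
    Multiset.cons a '' progressionPartitions a m k =
      {γ ∈ progressionPartitions a m (k + 1) | a ∈ γ} := by
  ext γ
  constructor
  · rintro ⟨δ, ⟨hδ, hcard⟩, rfl⟩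
    exact ⟨⟨by simpa using hδ, by simpa using hcard⟩, Multiset.mem_cons_self a δ⟩
  · rintro ⟨⟨hγ, hcard⟩, ha⟩
    obtain ⟨δ, rfl⟩ := Multiset.exists_cons_of_mem ha
    exact ⟨δ, ⟨fun x hx ↦ hγ x (Multiset.mem_cons_of_mem hx), by simpa using hcard⟩, rfl⟩

theorem weightSeries_progressionPartitions_succ {a m : ℕ} (ha : 0 < a) (hm : 0 < m) (k : ℕ) :
    weightSeries (progressionPartitions a m (k + 1)) Multiset.sum =
      X ^ a * weightSeries (progressionPartitions a m k) Multiset.sum +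
        X ^ (m * (k + 1)) * weightSeries (progressionPartitions a m (k + 1)) Multiset.sum := by
  set P := progressionPartitions a m with hP
  have hsplit : Multiset.cons a '' P k ∪ Multiset.map (· + m) '' P (k + 1) = P (k + 1) := by
    rw [hP, image_cons_progressionPartitions, image_map_add_progressionPartitions hm, ← Set.sep_or]
    exact Set.sep_eq_self_iff_mem_true.2 fun γ _ ↦ em (a ∈ γ)
  have hdisj : Disjoint (Multiset.cons a '' P k) (Multiset.map (· + m) '' P (k + 1)) := by
    rw [hP, image_cons_progressionPartitions, image_map_add_progressionPartitions hm]
    exact Set.disjoint_left.2 fun γ hγ hγ' ↦ hγ'.2 hγ.2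
  have hfin {s : Set (Multiset ℕ)} (hs : s ⊆ P (k + 1)) (n : ℕ) : {γ ∈ s | γ.sum = n}.Finite :=
    (finite_setOf_mem_progressionPartitions ha m (k + 1) n).subset fun _ hγ ↦ ⟨hs hγ.1, hγ.2⟩
  have hcons : weightSeries (Multiset.cons a '' P k) Multiset.sum =
      X ^ a * weightSeries (P k) Multiset.sum :=
    weightSeries_image (fun _ _ _ _ ↦ (Multiset.cons_inj_right a).1)
      fun γ _ ↦ Multiset.sum_cons a γ
  have hshift : weightSeries (Multiset.map (· + m) '' P (k + 1)) Multiset.sum =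
      X ^ (m * (k + 1)) * weightSeries (P (k + 1)) Multiset.sum := by
    refine weightSeries_image (Multiset.map_injective (add_left_injective m)).injOn fun γ hγ ↦ ?_
    rw [Multiset.sum_map_add, Multiset.map_id', Multiset.map_const', Multiset.sum_replicate, hγ.2,
      smul_eq_mul]
    ring
  rw [← hcons, ← hshift, ← weightSeries_union hdisj (hfin (Set.subset_union_left.trans hsplit.le))
    (hfin (Set.subset_union_right.trans hsplit.le)), hsplit]

/-- The generating function of the partitions with parts `≥ a` and `≡ a (mod m)`: the outer
variable marks the number of parts, the inner one the size. -/
noncomputable def progressionSeries (a m : ℕ) : ℤ⟦X⟧⟦X⟧ :=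
  .mk fun k ↦ weightSeries (progressionPartitions a m k) Multiset.sum

theorem one_sub_mul_progressionSeries {a m : ℕ} (ha : 0 < a) (hm : 0 < m) :
    (1 - C (X ^ a) * X) * progressionSeries a m = rescale (X ^ m) (progressionSeries a m) := by
  ext1 k
  rw [sub_mul, one_mul, mul_assoc, map_sub, coeff_C_mul, coeff_rescale, ← pow_mul]
  rcases k with _ | k
  · simp
  · rw [coeff_succ_X_mul]
    simp only [progressionSeries, coeff_mk]
    linear_combination weightSeries_progressionPartitions_succ ha hm k

/-- The size of a copartition `(γ, ρ, σ)`. -/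
def copartitionSize (t : Multiset ℕ × Multiset ℕ × Multiset ℕ) : ℕ :=
  t.1.sum + t.2.1.sum + t.2.2.sum

/-- The `(a,b,m)`-copartitions `(γ, ρ, σ)` with `ν(γ) = k` and `ν(σ) = l`. -/
def copartitionsOfCard (a b m k l : ℕ) : Set (Multiset ℕ × Multiset ℕ × Multiset ℕ) :=
  {t | IsCopartition a b m t.1 t.2.1 t.2.2 ∧ t.1.card = k ∧ t.2.2.card = l}

theorem image_prod_progressionPartitions (a b m k l : ℕ) :
    (fun p : Multiset ℕ × Multiset ℕ ↦ (p.1, Multiset.replicate l (m * k), p.2)) ''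
      (progressionPartitions a m k ×ˢ progressionPartitions b m l) =
      copartitionsOfCard a b m k l := by
  ext ⟨γ, ρ, σ⟩
  constructor
  · rintro ⟨⟨γ, σ⟩, ⟨⟨hγ, rfl⟩, hσ, rfl⟩, ⟨⟩⟩
    exact ⟨⟨hγ, hσ, rfl⟩, rfl, rfl⟩
  · rintro ⟨⟨hγ, hσ, hρ⟩, rfl, rfl⟩
    exact ⟨(γ, σ), ⟨⟨hγ, rfl⟩, hσ, rfl⟩, congrArg (γ, ·, σ) hρ.symm⟩

theorem weightSeries_copartitionsOfCard {a b : ℕ} (ha : 0 < a) (hb : 0 < b) (m k l : ℕ) :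
    weightSeries (copartitionsOfCard a b m k l) copartitionSize =
      (X ^ m) ^ (k * l) * coeff k (progressionSeries a m) * coeff l (progressionSeries b m) := by
  have hinj : Function.Injective
      fun p : Multiset ℕ × Multiset ℕ ↦ (p.1, Multiset.replicate l (m * k), p.2) := by
    rintro ⟨γ, σ⟩ ⟨γ', σ'⟩ h
    simpa using h
  rw [← image_prod_progressionPartitions,
    weightSeries_image (d := m * (k * l)) (v := fun p ↦ p.1.sum + p.2.sum) hinj.injOn,
    weightSeries_prod (finite_setOf_mem_progressionPartitions ha m k)
      (finite_setOf_mem_progressionPartitions hb m l)]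
  · simp only [progressionSeries, coeff_mk, pow_mul, mul_assoc]
  · intro p _
    simp only [copartitionSize, Multiset.sum_replicate, smul_eq_mul]
    ring

theorem coeff_twistedMul_rescale_neg_one_progressionSeries {a b : ℕ} (ha : 0 < a) (hb : 0 < b)
    (m N : ℕ) :
    coeff N (twistedMul (X ^ m) (rescale (-1) (progressionSeries a m)) (progressionSeries b m)) =
      ∑ p ∈ antidiagonal N,
        (-1) ^ p.1 * weightSeries (copartitionsOfCard a b m p.1 p.2) copartitionSize := by
  simp only [twistedMul, coeff_mk, coeff_rescale, weightSeries_copartitionsOfCard ha hb]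
  exact Finset.sum_congr rfl fun p _ ↦ by ring

theorem ncard_even_sub_ncard_odd {α ι : Type*} {s : Set α} (hs : s.Finite)
    {g : α → ι} {t : Finset ι} (hg : ∀ x ∈ s, g x ∈ t) (f : ι → ℕ) :
    ({x ∈ s | Even (f (g x))}.ncard : ℤ) - {x ∈ s | Odd (f (g x))}.ncard =
      ∑ i ∈ t, (-1) ^ f i * ({x ∈ s | g x = i}.ncard : ℤ) := by
  classical
  lift s to Finset α using hs
  have hcard (p : α → Prop) [DecidablePred p] :
      ({x ∈ (s : Set α) | p x}.ncard : ℤ) = ∑ x ∈ s, if p x then 1 else 0 := by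
    rw [← Finset.natCast_card_filter, ← Set.ncard_coe_finset, Finset.coe_filter]
    rfl
  have hsign (x : α) : ((if Even (f (g x)) then 1 else 0) - if Odd (f (g x)) then 1 else 0) =
      (-1 : ℤ) ^ f (g x) := by
    rcases Nat.even_or_odd (f (g x)) with h | h
    · rw [if_pos h, if_neg (Nat.not_odd_iff_even.2 h), h.neg_one_pow, sub_zero]
    · rw [if_neg (Nat.not_even_iff_odd.2 h), if_pos h, h.neg_one_pow, zero_sub]
  simp only [hcard, ← Finset.sum_sub_distrib, hsign]
  rw [← Finset.sum_fiberwise_of_maps_to hg]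
  refine Finset.sum_congr rfl fun i _ ↦ ?_
  rw [← Finset.sum_filter, Finset.mul_sum]
  refine Finset.sum_congr rfl fun x hx ↦ ?_
  rw [(Finset.mem_filter.1 hx).2, mul_one]

theorem finite_cpSet {a b : ℕ} (ha : 0 < a) (hb : 0 < b) (m n : ℕ) : (cpSet a b m n).Finite := by
  have hfin := finite_setOf_pos_and_sum_le n
  refine ((hfin.prod hfin).image fun p ↦
    (p.1, Multiset.replicate p.2.card (m * p.1.card), p.2)).subset ?_
  rintro ⟨γ, ρ, σ⟩ ⟨⟨hγ, hσ, hρ⟩, hn⟩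
  dsimp only at hγ hσ hρ hn
  exact ⟨(γ, σ), ⟨⟨fun x hx ↦ ha.trans_le (hγ x hx).1, by lia⟩,
    fun x hx ↦ hb.trans_le (hσ x hx).1, by lia⟩, by rw [hρ]⟩

theorem card_add_card_le_of_mem_cpSet {a b m n : ℕ} (ha : 0 < a) (hb : 0 < b)
    {t : Multiset ℕ × Multiset ℕ × Multiset ℕ} (ht : t ∈ cpSet a b m n) :
    t.1.card + t.2.2.card ≤ n := by
  obtain ⟨⟨hγ, hσ, -⟩, hn⟩ := ht
  have hγcard := Multiset.card_nsmul_le_sum fun x hx ↦ ha.trans_le (hγ x hx).1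
  have hσcard := Multiset.card_nsmul_le_sum fun x hx ↦ hb.trans_le (hσ x hx).1
  simp only [smul_eq_mul] at hγcard hσcard
  lia

theorem cpEven_sub_cpOdd {a b : ℕ} (ha : 0 < a) (hb : 0 < b) (m n : ℕ) :
    (cpEven a b m n : ℤ) - cpOdd a b m n =
      ∑ N ∈ Finset.range (n + 1), coeff n (coeff N
        (twistedMul (X ^ m) (rescale (-1) (progressionSeries a m)) (progressionSeries b m))) := by
  have hcell (k l : ℕ) :
      {t ∈ cpSet a b m n | (⟨t.1.card + t.2.2.card, t.1.card, t.2.2.card⟩ : Σ _ : ℕ, ℕ × ℕ) =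
        ⟨k + l, k, l⟩} = {t ∈ copartitionsOfCard a b m k l | copartitionSize t = n} := by
    ext t
    simp only [cpSet, copartitionsOfCard, copartitionSize, Set.mem_ofPred_eq, Sigma.mk.injEq,
      heq_eq_eq, Prod.mk.injEq]
    grind
  have hmaps : ∀ t ∈ cpSet a b m n,
      (⟨t.1.card + t.2.2.card, t.1.card, t.2.2.card⟩ : Σ _ : ℕ, ℕ × ℕ) ∈
        (Finset.range (n + 1)).sigma fun N ↦ antidiagonal N := fun t ht ↦
    Finset.mem_sigma.2 ⟨Finset.mem_range_succ_iff.2 (card_add_card_le_of_mem_cpSet ha hb ht),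
      mem_antidiagonal.2 rfl⟩
  refine (ncard_even_sub_ncard_odd (finite_cpSet ha hb m n) hmaps fun i ↦ i.2.1).trans ?_
  rw [Finset.sum_sigma]
  refine Finset.sum_congr rfl fun N _ ↦ ?_
  rw [coeff_twistedMul_rescale_neg_one_progressionSeries ha hb, map_sum]
  refine Finset.sum_congr rfl fun p hp ↦ ?_
  obtain rfl := mem_antidiagonal.1 hp
  have hconst : ((-1) ^ p.1 : ℤ⟦X⟧) = C ((-1) ^ p.1) := by simp
  rw [hconst, coeff_C_mul, weightSeries, coeff_mk, ← hcell]

theorem stmt17 (a m : ℕ) (ha : 0 < a) (hm : 0 < m) (n : ℕ) :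
    cpOdd a a m n ≤ cpEven a a m n := by
  let S := coeffSubsemiring (Subsemiring.nonneg ℤ)
  have hX (d : ℕ) : X ^ d ∈ S := pow_mem (X_mem_coeffSubsemiring _) d
  have hdiv (k : ℕ) (f : ℤ⟦X⟧) (hf : (1 - (X ^ m) ^ (k + 1)) * f ∈ S) : f ∈ S := by
    rw [← pow_mul] at hf
    exact mem_coeffSubsemiring_of_one_sub_X_pow_mul_mem (by positivity) hf
  have hconst : constantCoeff (progressionSeries a m) ∈ S := fun s ↦ by
    simp [progressionSeries, weightSeries]
  have hnonneg := twistedMul_rescale_neg_one_mem_coeffSubsemiring (hX m) hdiv (hX a) hconst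
    (one_sub_mul_progressionSeries ha hm)
  rw [← Nat.cast_le (α := ℤ), ← sub_nonneg, cpEven_sub_cpOdd ha ha]
  exact Finset.sum_nonneg fun N _ ↦ hnonneg N n
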